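/- Let P, A, 𝔄 be as in the standing conventions (P a finite poset with linear extension p_1,...,p_m, A_i ⊆ [n] nonempty, 𝔄 a poset ideal of Hom(P,A)). For t ≥ 0, the minimal generating set of the t-th homological shift ideal HS_t(L(𝔄)) consists exactly of the monomials X_{p_1,K_1}⋯X_{p_m,K_m} where (1) ∅ ≠ K_i ⊆ A_i for all i; (2) max(K_i) ≤ min(K_j) whenever p_i < p_j; (3) |K_1| + ⋯ + |K_m| = m + t; and (4) the map sending p_i to max(K_i) belongs to 𝔄. -/

import Mathlib

open MvPolynomial

/-- A minimal multigraded free resolution of an ideal `I` in a multivariate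
polynomial ring: free modules `B t →₀ R` with multidegree-labelled bases,
differentials `d t`, augmentation `ε` with image `I`, exact, with the entry of
the differential in position `(b,c)` a scalar multiple of the monomial of
multidegree `deg b - deg c` (multigradedness) which is a non-unit (minimality:
`deg t c ≠ deg (t+1) b` whenever the entry is nonzero). -/
structure MinMGFreeRes (K : Type) [Field K] (σ : Type)
    (I : Ideal (MvPolynomial σ K)) where
  B : ℕ → Type
  finB : ∀ t, Finite (B t)
  deg : (t : ℕ) → B t → (σ →₀ ℕ)
  d : (t : ℕ) →
    ((B (t + 1)) →₀ MvPolynomial σ K) →ₗ[MvPolynomial σ K]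
      ((B t) →₀ MvPolynomial σ K)
  ε : ((B 0) →₀ MvPolynomial σ K) →ₗ[MvPolynomial σ K] MvPolynomial σ K
  bounded : ∃ N, ∀ t, N ≤ t → IsEmpty (B t)
  epi : LinearMap.range ε = I
  exact0 : LinearMap.ker ε = LinearMap.range (d 0)
  exact : ∀ t, LinearMap.ker (d t) = LinearMap.range (d (t + 1))
  graded_eps : ∀ b, ε (Finsupp.single b 1) = monomial (deg 0 b) 1
  graded_d : ∀ (t : ℕ) (b : B (t + 1)) (c : B t), ∃ k : K,
    (d t (Finsupp.single b 1)) c = monomial (deg (t + 1) b - deg t c) k ∧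
      (k ≠ 0 → deg t c ≤ deg (t + 1) b ∧ deg t c ≠ deg (t + 1) b)

/-- `d` is (the exponent vector of) a minimal monomial generator of `I`. -/
def IsMinGen {K : Type} [Field K] {σ : Type} (I : Ideal (MvPolynomial σ K))
    (d : σ →₀ ℕ) : Prop :=
  (monomial d (1 : K)) ∈ I ∧
    ∀ d' : σ →₀ ℕ, d' ≤ d → (monomial d' (1 : K)) ∈ I → d' = d

/-- The exponent vectors `X_{p₁,K₁}⋯X_{pₘ,Kₘ}` described in STATEMENT 4:
(1) `∅ ≠ Kᵢ ⊆ Aᵢ`; (2) `max Kᵢ ≤ min Kⱼ` whenever `pᵢ < pⱼ`;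
(3) `|K₁|+⋯+|Kₘ| = m + t`; (4) `(max K₁, …, max Kₘ) ∈ 𝔄`. -/
def DescribedExp (m n : ℕ) (r : Fin m → Fin m → Prop)
    (A : Fin m → Finset (Fin n)) (𝔄 : Set (Fin m → Fin n)) (t : ℕ)
    (dd : Fin m × Fin n →₀ ℕ) : Prop :=
  ∃ Kf : Fin m → Finset (Fin n),
    (∀ i, Kf i ⊆ A i) ∧ (∀ i, (Kf i).Nonempty) ∧
    (∑ i, (Kf i).card) = m + t ∧
    (∀ i j, r i j → i ≠ j → ∀ a ∈ Kf i, ∀ b ∈ Kf j, a ≤ b) ∧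
    (∃ g ∈ 𝔄, ∀ i, g i ∈ Kf i ∧ ∀ a ∈ Kf i, a ≤ g i) ∧
    dd = ∑ i : Fin m, ∑ a ∈ Kf i, Finsupp.single ((i, a) : Fin m × Fin n) 1

/-!
Setting every variable to `1` turns a multigraded free resolution into a complex of vector spaces
filtered by multidegree and exact in each step of the filtration. Two such complexes with the same
degrees in homological degree `0` are connected by filtered chain maps in both directions, and the
composites are homotopic to the identity. If the complexes are minimal, a filtered homotopy cannot
contribute to a diagonal coefficient, so the diagonal coefficients of the composites are `1`, and
the same multidegrees occur in both complexes.

It thus suffices to exhibit one minimal resolution. Its basis in homological degree `t` consists of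
the `S ⊆ P × Q` of cardinality `|P| + t` that meet every row `{i} × Q` and contain only graphs of
functions in `𝔄`; the differential is the simplicial boundary, with the faces missing some row
discarded. Below a multidegree `α`, let `f` be the least function in `𝔄` whose graph monomial
divides `X ^ α`. Coning with apex `(i, f i)` for increasing `i` replaces a cycle by a homologous
one that lies over row `i` on the graph of `f`; in the end every cell of the cycle is the graph of
`f`, and the cycle is zero.
-/

section DegreeFiltration

variable {R D M β γ δ : Type*} [Ring R] [AddCommGroup M] [Module R M]

theorem map_mem_of_forall_single {f : (β →₀ R) →ₗ[R] M} {W : Submodule R M} {v : β →₀ R}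
    (h : ∀ b, v b ≠ 0 → f (Finsupp.single b 1) ∈ W) : f v ∈ W := by
  have hv : v ∈ Finsupp.supported R R (v.support : Set β) := Finsupp.mem_supported_support R v
  rw [Finsupp.supported_eq_span_single] at hv
  have hle : Submodule.span R ((fun b => Finsupp.single b 1) '' (v.support : Set β)) ≤ W.comap f :=
    Submodule.span_le.2 <| Set.forall_mem_image.2 fun b hb => h b (Finsupp.mem_support_iff.1 hb)
  exact hle hv

theorem exists_single_apply_ne_zero {f : (β →₀ R) →ₗ[R] (γ →₀ R)} {v : β →₀ R} {c : γ}
    (h : f v c ≠ 0) : ∃ b, v b ≠ 0 ∧ f (Finsupp.single b 1) c ≠ 0 := by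
  contrapose! h
  exact map_mem_of_forall_single (f := f) (W := LinearMap.ker (Finsupp.lapply c)) h

variable (R) in
/-- The elements of degree at most `a` of the free module on a basis `β` graded by `deg`. -/
def degLE [LE D] (deg : β → D) (a : D) : Submodule R (β →₀ R) :=
  Finsupp.supported R R {b | deg b ≤ a}

theorem mem_degLE [LE D] {deg : β → D} {a : D} {v : β →₀ R} :
    v ∈ degLE R deg a ↔ ∀ b, v b ≠ 0 → deg b ≤ a := by
  simp only [degLE, Finsupp.mem_supported, Set.subset_def, Finset.mem_coe,
    Finsupp.mem_support_iff, Set.mem_ofPred_eq]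

variable [Preorder D] {degβ : β → D} {degγ : γ → D} {degδ : δ → D}

theorem degLE_mono (deg : β → D) : Monotone (degLE R deg) := fun _ _ h =>
  Finsupp.supported_mono fun _ hb => hb.trans h

theorem single_mem_degLE (deg : β → D) (b : β) (r : R) :
    Finsupp.single b r ∈ degLE R deg (deg b) :=
  Finsupp.single_mem_supported R r le_rfl

/-- Linear maps of graded free modules that do not raise the degree. -/
def IsFiltered (degβ : β → D) (degγ : γ → D) (f : (β →₀ R) →ₗ[R] (γ →₀ R)) : Prop :=
  ∀ b, f (Finsupp.single b 1) ∈ degLE R degγ (degβ b)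

namespace IsFiltered

theorem map_mem {f : (β →₀ R) →ₗ[R] (γ →₀ R)} (hf : IsFiltered degβ degγ f) {a : D} {v : β →₀ R}
    (hv : v ∈ degLE R degβ a) : f v ∈ degLE R degγ a :=
  map_mem_of_forall_single fun b hb => degLE_mono degγ (mem_degLE.1 hv b hb) (hf b)

theorem comp {g : (γ →₀ R) →ₗ[R] (δ →₀ R)} {f : (β →₀ R) →ₗ[R] (γ →₀ R)}
    (hg : IsFiltered degγ degδ g) (hf : IsFiltered degβ degγ f) :
    IsFiltered degβ degδ (g ∘ₗ f) :=
  fun b => hg.map_mem (hf b)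

theorem sub {f g : (β →₀ R) →ₗ[R] (γ →₀ R)} (hf : IsFiltered degβ degγ f)
    (hg : IsFiltered degβ degγ g) : IsFiltered degβ degγ (f - g) :=
  fun b => Submodule.sub_mem _ (hf b) (hg b)

theorem id (deg : β → D) : IsFiltered deg deg (LinearMap.id : (β →₀ R) →ₗ[R] (β →₀ R)) :=
  fun b => single_mem_degLE deg b 1

end IsFiltered

end DegreeFiltration

theorem exists_seq_of_forall_exists_succ {X : ℕ → Type*} {p : ∀ t, X t → Prop}
    {r : ∀ t, X t → X (t + 1) → Prop} (x₀ : X 0) (h₀ : p 0 x₀)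
    (hstep : ∀ t x, p t x → ∃ y, p (t + 1) y ∧ r t x y) :
    ∃ x : ∀ t, X t, x 0 = x₀ ∧ (∀ t, p t (x t)) ∧ ∀ t, r t (x t) (x (t + 1)) := by
  choose next hp hr using hstep
  let x : ∀ t, {x : X t // p t x} := fun t =>
    Nat.rec ⟨x₀, h₀⟩ (fun t x => ⟨next t x.1 x.2, hp t x.1 x.2⟩) t
  exact ⟨fun t => (x t).1, rfl, fun t => (x t).2, fun t => hr t (x t).1 (x t).2⟩

universe u

/-- The scalar data of a complex of multigraded free modules: the basis in each homological
degree with its multidegrees, and the differentials with every variable set to `1`. -/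
structure Frame (R D : Type*) [Ring R] where
  B : ℕ → Type u
  deg : ∀ t, B t → D
  d : ∀ t, (B (t + 1) →₀ R) →ₗ[R] (B t →₀ R)

namespace Frame

variable {R D : Type*} [Ring R]

/-- The augmentation of a frame, the sum of the coefficients in homological degree `0`. -/
noncomputable def aug (F : Frame R D) : (F.B 0 →₀ R) →ₗ[R] R :=
  Finsupp.linearCombination R fun _ => 1

@[simp]
theorem aug_single (F : Frame R D) (b : F.B 0) (r : R) : F.aug (Finsupp.single b r) = r := by
  simp [aug]

/-- The cycles of the complex augmented by `Frame.aug`. -/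
noncomputable def cycles (F : Frame R D) : ∀ t, Submodule R (F.B t →₀ R)
  | 0 => LinearMap.ker F.aug
  | t + 1 => LinearMap.ker (F.d t)

variable [PartialOrder D]

/-- A frame is a resolution if the complex augmented by `Frame.aug` is exact in each degree of
the filtration by `D`; nothing is required of the image of the augmentation. -/
structure IsResolution (F : Frame R D) : Prop where
  filtered : ∀ t, IsFiltered (F.deg (t + 1)) (F.deg t) (F.d t)
  d_mem_cycles : ∀ t v, F.d t v ∈ F.cycles t
  exact : ∀ t a, ∀ v ∈ degLE R (F.deg t) a, v ∈ F.cycles t →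
    ∃ w ∈ degLE R (F.deg (t + 1)) a, F.d t w = v

/-- A frame is minimal if its differentials relate no two basis elements of equal degree. -/
def IsMinimal (F : Frame R D) : Prop :=
  ∀ t b c, F.d t (Finsupp.single b 1) c ≠ 0 → F.deg t c ≠ F.deg (t + 1) b

/-- Degree-preserving chain maps over the identity of the augmented term. -/
structure Hom (F G : Frame R D) where
  toLinearMap : ∀ t, (F.B t →₀ R) →ₗ[R] (G.B t →₀ R)
  filtered : ∀ t, IsFiltered (F.deg t) (G.deg t) (toLinearMap t)
  aug_comp : G.aug ∘ₗ toLinearMap 0 = F.aug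
  d_comp : ∀ t, G.d t ∘ₗ toLinearMap (t + 1) = toLinearMap t ∘ₗ F.d t

variable {F G H : Frame R D}

/-- The identity chain map. -/
noncomputable def Hom.id (F : Frame R D) : Hom F F where
  toLinearMap _ := LinearMap.id
  filtered _ := IsFiltered.id _
  aug_comp := rfl
  d_comp _ := rfl

/-- The composition of chain maps. -/
noncomputable def Hom.comp (ψ : Hom G H) (φ : Hom F G) : Hom F H where
  toLinearMap t := ψ.toLinearMap t ∘ₗ φ.toLinearMap t
  filtered t := (ψ.filtered t).comp (φ.filtered t)
  aug_comp := by rw [← LinearMap.comp_assoc, ψ.aug_comp, φ.aug_comp]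
  d_comp t := by
    rw [← LinearMap.comp_assoc, ψ.d_comp, LinearMap.comp_assoc, φ.d_comp, LinearMap.comp_assoc]

theorem IsResolution.exists_filtered_lift {β : Type*} {deg : β → D} (hG : G.IsResolution) {t : ℕ}
    {f : (β →₀ R) →ₗ[R] (G.B t →₀ R)} (hf : IsFiltered deg (G.deg t) f)
    (hcyc : ∀ v, f v ∈ G.cycles t) :
    ∃ g : (β →₀ R) →ₗ[R] (G.B (t + 1) →₀ R),
      IsFiltered deg (G.deg (t + 1)) g ∧ G.d t ∘ₗ g = f := by
  choose w hw hdw using fun b => hG.exact t _ _ (hf b) (hcyc _)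
  have hsingle (b : β) : Finsupp.linearCombination R w (Finsupp.single b 1) = w b := by
    rw [Finsupp.linearCombination_single, one_smul]
  refine ⟨Finsupp.linearCombination R w, fun b => by rw [hsingle]; exact hw b, ?_⟩
  refine Finsupp.lhom_ext' fun b => LinearMap.ext_ring ?_
  simp only [LinearMap.comp_apply, Finsupp.lsingle_apply, hsingle, hdw]

theorem IsResolution.nonempty_hom (hF : F.IsResolution) (hG : G.IsResolution)
    (h : ∀ b : F.B 0, ∃ c : G.B 0, G.deg 0 c ≤ F.deg 0 b) : Nonempty (Hom F G) := by
  choose c hc using h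
  have hzero : IsFiltered (F.deg 0) (G.deg 0) (Finsupp.lmapDomain R R c) ∧
      ∀ v ∈ F.cycles 0, Finsupp.lmapDomain R R c v ∈ G.cycles 0 := by
    refine ⟨fun b => ?_, fun v (hv : F.aug v = 0) => ?_⟩
    · rw [Finsupp.lmapDomain_apply, Finsupp.mapDomain_single]
      exact degLE_mono _ (hc b) (single_mem_degLE _ _ _)
    · change G.aug _ = 0
      simpa [aug, Finsupp.linearCombination_mapDomain, Function.comp_def] using hv
  have hstep (t : ℕ) (φ : (F.B t →₀ R) →ₗ[R] (G.B t →₀ R))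
      (hφ : IsFiltered (F.deg t) (G.deg t) φ ∧ ∀ v ∈ F.cycles t, φ v ∈ G.cycles t) :
      ∃ φ' : (F.B (t + 1) →₀ R) →ₗ[R] (G.B (t + 1) →₀ R),
        (IsFiltered (F.deg (t + 1)) (G.deg (t + 1)) φ' ∧
          ∀ v ∈ F.cycles (t + 1), φ' v ∈ G.cycles (t + 1)) ∧
        G.d t ∘ₗ φ' = φ ∘ₗ F.d t := by
    obtain ⟨φ', hφ', hcomm⟩ := hG.exists_filtered_lift (hφ.1.comp (hF.filtered t))
      fun v => hφ.2 _ (hF.d_mem_cycles t v)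
    refine ⟨φ', ⟨hφ', fun v (hv : F.d t v = 0) => ?_⟩, hcomm⟩
    change (G.d t ∘ₗ φ') v = 0
    rw [hcomm, LinearMap.comp_apply, hv, map_zero]
  obtain ⟨φ, hφ₀, hφ, hcomm⟩ := exists_seq_of_forall_exists_succ _ hzero hstep
  refine ⟨⟨φ, fun t => (hφ t).1, ?_, hcomm⟩⟩
  rw [hφ₀]
  exact Finsupp.lhom_ext' fun b => LinearMap.ext_ring (by simp)

theorem IsResolution.exists_homotopy (hF : F.IsResolution) (hG : G.IsResolution)
    (φ ψ : Hom F G) :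
    ∃ s : ∀ t, (F.B t →₀ R) →ₗ[R] (G.B (t + 1) →₀ R),
      (∀ t, IsFiltered (F.deg t) (G.deg (t + 1)) (s t)) ∧
      G.d 0 ∘ₗ s 0 = φ.toLinearMap 0 - ψ.toLinearMap 0 ∧
      ∀ t, G.d (t + 1) ∘ₗ s (t + 1) =
        φ.toLinearMap (t + 1) - ψ.toLinearMap (t + 1) - s t ∘ₗ F.d t := by
  have hsub (t : ℕ) := (φ.filtered t).sub (ψ.filtered t)
  obtain ⟨s₀, hs₀, hds₀⟩ := hG.exists_filtered_lift (hsub 0) fun v => by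
    change (G.aug ∘ₗ (φ.toLinearMap 0 - ψ.toLinearMap 0)) v = 0
    rw [LinearMap.comp_sub, φ.aug_comp, ψ.aug_comp, sub_self, LinearMap.zero_apply]
  have hstep (t : ℕ) (s : (F.B t →₀ R) →ₗ[R] (G.B (t + 1) →₀ R))
      (hs : IsFiltered (F.deg t) (G.deg (t + 1)) s ∧
        ∀ v ∈ F.cycles t, G.d t (s v) = φ.toLinearMap t v - ψ.toLinearMap t v) :
      ∃ s' : (F.B (t + 1) →₀ R) →ₗ[R] (G.B (t + 2) →₀ R),
        (IsFiltered (F.deg (t + 1)) (G.deg (t + 2)) s' ∧ ∀ v ∈ F.cycles (t + 1),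
          G.d (t + 1) (s' v) = φ.toLinearMap (t + 1) v - ψ.toLinearMap (t + 1) v) ∧
        G.d (t + 1) ∘ₗ s' = φ.toLinearMap (t + 1) - ψ.toLinearMap (t + 1) - s ∘ₗ F.d t := by
    obtain ⟨s', hs', hds'⟩ := hG.exists_filtered_lift
      ((hsub (t + 1)).sub (hs.1.comp (hF.filtered t))) fun v => by
        change G.d t _ = 0
        have hφ := LinearMap.congr_fun (φ.d_comp t) v
        have hψ := LinearMap.congr_fun (ψ.d_comp t) v
        simp only [LinearMap.comp_apply, LinearMap.sub_apply, map_sub] at hφ hψ ⊢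
        rw [hφ, hψ, hs.2 _ (hF.d_mem_cycles t v), sub_self]
    refine ⟨s', ⟨hs', fun v (hv : F.d t v = 0) => ?_⟩, hds'⟩
    simpa [hv] using LinearMap.congr_fun hds' v
  obtain ⟨s, rfl, hs, hds⟩ := exists_seq_of_forall_exists_succ s₀
    ⟨hs₀, fun v _ => LinearMap.congr_fun hds₀ v⟩ hstep
  exact ⟨s, fun t => (hs t).1, hds₀, hds⟩

theorem IsMinimal.d_apply_eq_zero (hmin : F.IsMinimal) (hF : F.IsResolution) {t : ℕ} {b : F.B t}
    {w : F.B (t + 1) →₀ R} (hw : w ∈ degLE R (F.deg (t + 1)) (F.deg t b)) : F.d t w b = 0 := by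
  by_contra h
  obtain ⟨c, hc, hcb⟩ := exists_single_apply_ne_zero h
  exact hmin t c b hcb ((mem_degLE.1 (hF.filtered t c) b hcb).antisymm (mem_degLE.1 hw c hc))

-- A homotopy to the identity changes no diagonal coefficient.
theorem Hom.toLinearMap_single_self (hF : F.IsResolution) (hmin : F.IsMinimal) (φ : Hom F F)
    (t : ℕ) (b : F.B t) : φ.toLinearMap t (Finsupp.single b 1) b = 1 := by
  obtain ⟨s, hs, hs₀, hs₁⟩ := hF.exists_homotopy hF φ (Hom.id F)
  have hds : F.d t (s t (Finsupp.single b 1)) b = 0 := hmin.d_apply_eq_zero hF (hs t b)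
  cases t with
  | zero =>
    rw [← LinearMap.comp_apply, hs₀] at hds
    simpa [Hom.id, sub_eq_zero] using hds
  | succ t =>
    have hsd : s t (F.d t (Finsupp.single b 1)) b = 0 := by
      by_contra h
      obtain ⟨c, hc, hcb⟩ := exists_single_apply_ne_zero h
      exact hmin t b c hc
        ((mem_degLE.1 (hF.filtered t b) c hc).antisymm (mem_degLE.1 (hs t c) b hcb))
    rw [← LinearMap.comp_apply, hs₁] at hds
    simpa [Hom.id, sub_eq_zero, hsd] using hds

theorem IsMinimal.range_deg_subset [Nontrivial R] (hmin : F.IsMinimal) (hF : F.IsResolution)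
    (φ : Hom F G) (ψ : Hom G F) (t : ℕ) : Set.range (F.deg t) ⊆ Set.range (G.deg t) := by
  rintro _ ⟨b, rfl⟩
  have hne : ψ.toLinearMap t (φ.toLinearMap t (Finsupp.single b 1)) b ≠ 0 := by
    have h := (ψ.comp φ).toLinearMap_single_self hF hmin t b
    exact fun h₀ => one_ne_zero (h.symm.trans h₀)
  obtain ⟨c, hbc, hcb⟩ := exists_single_apply_ne_zero hne
  exact ⟨c, (mem_degLE.1 (φ.filtered t b) c hbc).antisymm (mem_degLE.1 (ψ.filtered t c) b hcb)⟩

theorem IsMinimal.range_deg_eq [Nontrivial R] (hFmin : F.IsMinimal) (hGmin : G.IsMinimal)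
    (hF : F.IsResolution) (hG : G.IsResolution)
    (h : ∀ a, (∃ b, F.deg 0 b ≤ a) ↔ ∃ c, G.deg 0 c ≤ a) (t : ℕ) :
    Set.range (F.deg t) = Set.range (G.deg t) := by
  obtain ⟨φ⟩ := hF.nonempty_hom hG fun b => (h _).1 ⟨b, le_rfl⟩
  obtain ⟨ψ⟩ := hG.nonempty_hom hF fun c => (h _).2 ⟨c, le_rfl⟩
  exact (hFmin.range_deg_subset hF φ ψ t).antisymm (hGmin.range_deg_subset hG ψ φ t)

end Frame

section MonomialIdeals

theorem monomial_mem_span_monomial_image_iff {R σ : Type*} [CommSemiring R] [Nontrivial R]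
    {s : Set (σ →₀ ℕ)} {α : σ →₀ ℕ} :
    monomial α (1 : R) ∈ Ideal.span ((fun d => monomial d (1 : R)) '' s) ↔ ∃ d ∈ s, d ≤ α := by
  classical
  simp [mem_ideal_span_monomial_image, support_monomial]

theorem isMinGen_span_iff_of_isAntichain {K σ : Type} [Field K] {s : Set (σ →₀ ℕ)}
    (hs : IsAntichain (· ≤ ·) s) {d : σ →₀ ℕ} :
    IsMinGen (Ideal.span ((fun d => monomial d (1 : K)) '' s)) d ↔ d ∈ s := by
  simp only [IsMinGen, monomial_mem_span_monomial_image_iff]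
  refine ⟨fun ⟨⟨e, he, hed⟩, hmin⟩ => hmin e hed ⟨e, he, le_rfl⟩ ▸ he, fun hd =>
    ⟨⟨d, hd, le_rfl⟩, fun d' hd' ⟨e, he, hed'⟩ => hd'.antisymm ?_⟩⟩
  exact (hs.eq he hd (hed'.trans hd')) ▸ hed'

end MonomialIdeals

section Homogenization

variable {R σ β γ : Type*} [CommRing R]

/-- The element of multidegree `α` of the free module over `MvPolynomial σ R` that becomes `v`
when every variable is set to `1`. The subtraction truncates, so this is meaningful only for
`v ∈ degLE R deg α`. -/
noncomputable def homogenize (deg : β → σ →₀ ℕ) (α : σ →₀ ℕ) :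
    (β →₀ R) →ₗ[R] (β →₀ MvPolynomial σ R) :=
  Finsupp.linearCombination R fun b => Finsupp.single b (monomial (α - deg b) 1)

theorem homogenize_single (deg : β → σ →₀ ℕ) (α : σ →₀ ℕ) (b : β) (r : R) :
    homogenize deg α (Finsupp.single b r) = Finsupp.single b (monomial (α - deg b) r) := by
  simp [homogenize, smul_monomial]

theorem homogenize_apply (deg : β → σ →₀ ℕ) (α : σ →₀ ℕ) (v : β →₀ R) (b : β) :
    homogenize deg α v b = monomial (α - deg b) (v b) := by
  classical
  induction v using Finsupp.induction_linear with
  | zero => simp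
  | add v w hv hw => simp [hv, hw]
  | single c r =>
    rw [homogenize_single]
    obtain rfl | hcb := eq_or_ne c b
    · simp
    · simp [Finsupp.single_eq_of_ne' hcb]

theorem homogenize_eq_zero_iff {deg : β → σ →₀ ℕ} {α : σ →₀ ℕ} {v : β →₀ R} :
    homogenize deg α v = 0 ↔ v = 0 := by
  simp only [Finsupp.ext_iff, homogenize_apply, Finsupp.zero_apply, monomial_eq_zero]

theorem monomial_smul_homogenize {deg : β → σ →₀ ℕ} {α : σ →₀ ℕ} {v : β →₀ R}
    (hv : v ∈ degLE R deg α) (δ : σ →₀ ℕ) :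
    monomial δ (1 : R) • homogenize deg α v = homogenize deg (δ + α) v := by
  ext1 b
  rw [Finsupp.smul_apply, homogenize_apply, homogenize_apply, smul_eq_mul, monomial_mul, one_mul]
  by_cases hb : v b = 0
  · simp only [hb, map_zero]
  · rw [add_tsub_assoc_of_le (mem_degLE.1 hv b hb)]

open Classical in
/-- The homogeneous component of multidegree `α` of an element of a multigraded free module over
`MvPolynomial σ R`, with every variable set to `1`. -/
noncomputable def component (deg : β → σ →₀ ℕ) (α : σ →₀ ℕ) :
    (β →₀ MvPolynomial σ R) →ₗ[R] (β →₀ R) :=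
  Finsupp.lsum R fun b =>
    if deg b ≤ α then Finsupp.lsingle b ∘ₗ MvPolynomial.lcoeff R (α - deg b) else 0

open Classical in
theorem component_apply (deg : β → σ →₀ ℕ) (α : σ →₀ ℕ) (x : β →₀ MvPolynomial σ R) (b : β) :
    component deg α x b = if deg b ≤ α then coeff (α - deg b) (x b) else 0 := by
  induction x using Finsupp.induction_linear with
  | zero => simp
  | add x y hx hy => simp only [map_add, Finsupp.add_apply, hx, hy, coeff_add]; split_ifs <;> simp
  | single c p =>
    rw [component, Finsupp.lsum_single]
    obtain rfl | hcb := eq_or_ne c b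
    · split_ifs <;> simp
    · split_ifs <;> simp [Finsupp.single_eq_of_ne' hcb]

theorem component_mem_degLE (deg : β → σ →₀ ℕ) (α : σ →₀ ℕ) (x : β →₀ MvPolynomial σ R) :
    component deg α x ∈ degLE R deg α := by
  refine mem_degLE.2 fun b hb => ?_
  rw [component_apply] at hb
  exact of_not_not fun h => hb (if_neg h)

open Classical in
theorem component_homogenize {deg : β → σ →₀ ℕ} {δ : σ →₀ ℕ} {v : β →₀ R}
    (hv : v ∈ degLE R deg δ) (α : σ →₀ ℕ) :
    component deg α (homogenize deg δ v) = if δ = α then v else 0 := by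
  ext b
  rw [component_apply, homogenize_apply, coeff_monomial]
  by_cases hb : v b = 0
  · split_ifs <;> simp [hb]
  have hδ := mem_degLE.1 hv b hb
  obtain rfl | hne := eq_or_ne δ α
  · simp [hδ]
  · rw [if_neg hne, Finsupp.zero_apply]
    refine ite_eq_right_iff.2 fun hα => if_neg fun h => hne ?_
    rw [← tsub_add_cancel_of_le hδ, h, tsub_add_cancel_of_le hα]

variable {degβ : β → σ →₀ ℕ} {degγ : γ → σ →₀ ℕ}
  {f : (β →₀ MvPolynomial σ R) →ₗ[MvPolynomial σ R] (γ →₀ MvPolynomial σ R)}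
  {f₁ : (β →₀ R) →ₗ[R] (γ →₀ R)}

theorem map_homogenize (hf₁ : IsFiltered degβ degγ f₁)
    (h : ∀ b, f (Finsupp.single b 1) = homogenize degγ (degβ b) (f₁ (Finsupp.single b 1)))
    {α : σ →₀ ℕ} {v : β →₀ R} (hv : v ∈ degLE R degβ α) :
    f (homogenize degβ α v) = homogenize degγ α (f₁ v) := by
  rw [← sub_eq_zero]
  refine map_mem_of_forall_single (W := ⊥)
    (f := f.restrictScalars R ∘ₗ homogenize degβ α - homogenize degγ α ∘ₗ f₁) fun b hb => ?_
  have hb' : homogenize degβ α (Finsupp.single b (1 : R)) =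
      monomial (α - degβ b) (1 : R) • Finsupp.single b 1 := by
    rw [homogenize_single, Finsupp.smul_single, smul_eq_mul, mul_one]
  simp only [LinearMap.sub_apply, LinearMap.comp_apply, LinearMap.restrictScalars_apply]
  rw [hb', map_smul, h, monomial_smul_homogenize (hf₁ b),
    tsub_add_cancel_of_le (mem_degLE.1 hv b hb)]
  exact sub_self _

theorem component_map (hf₁ : IsFiltered degβ degγ f₁)
    (h : ∀ b, f (Finsupp.single b 1) = homogenize degγ (degβ b) (f₁ (Finsupp.single b 1)))
    (α : σ →₀ ℕ) (x : β →₀ MvPolynomial σ R) :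
    component degγ α (f x) = f₁ (component degβ α x) := by
  classical
  suffices component degγ α ∘ₗ f.restrictScalars R = f₁ ∘ₗ component degβ α from
    LinearMap.congr_fun this x
  refine Finsupp.lhom_ext' fun b => MvPolynomial.linearMap_ext fun δ => LinearMap.ext fun r => ?_
  have hmem : Finsupp.single b r ∈ degLE R degβ (δ + degβ b) :=
    degLE_mono degβ le_add_self (single_mem_degLE degβ b r)
  have hsingle : Finsupp.single b (monomial δ r) =
      homogenize degβ (δ + degβ b) (Finsupp.single b r) := by
    rw [homogenize_single, add_tsub_cancel_right]
  simp only [LinearMap.comp_apply, LinearMap.restrictScalars_apply, Finsupp.lsingle_apply, hsingle]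
  rw [map_homogenize hf₁ h hmem, component_homogenize hmem,
    component_homogenize (hf₁.map_mem hmem)]
  split_ifs
  · rfl
  · exact (map_zero f₁).symm

end Homogenization

namespace MinMGFreeRes

variable {K σ : Type} [Field K] {I : Ideal (MvPolynomial σ K)} (Res : MinMGFreeRes K σ I)

/-- The differential of a minimal multigraded free resolution with every variable set to `1`. -/
noncomputable def scalarD (t : ℕ) : (Res.B (t + 1) →₀ K) →ₗ[K] (Res.B t →₀ K) :=
  Finsupp.linearCombination K fun b =>
    component (Res.deg t) (Res.deg (t + 1) b) (Res.d t (Finsupp.single b 1))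

theorem scalarD_single (t : ℕ) (b : Res.B (t + 1)) :
    Res.scalarD t (Finsupp.single b 1) =
      component (Res.deg t) (Res.deg (t + 1) b) (Res.d t (Finsupp.single b 1)) := by
  rw [scalarD, Finsupp.linearCombination_single, one_smul]

theorem isFiltered_scalarD (t : ℕ) :
    IsFiltered (Res.deg (t + 1)) (Res.deg t) (Res.scalarD t) := fun b => by
  rw [scalarD_single]
  exact component_mem_degLE _ _ _

theorem scalarD_single_apply {t : ℕ} {b : Res.B (t + 1)} {c : Res.B t} {k : K}
    (hk : Res.d t (Finsupp.single b 1) c = monomial (Res.deg (t + 1) b - Res.deg t c) k)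
    (hle : k ≠ 0 → Res.deg t c ≤ Res.deg (t + 1) b) :
    Res.scalarD t (Finsupp.single b 1) c = k := by
  classical
  rw [scalarD_single, component_apply, hk, coeff_monomial, if_pos rfl]
  split_ifs with h
  · rfl
  · exact (of_not_not (mt hle h)).symm

theorem d_single_eq_homogenize (t : ℕ) (b : Res.B (t + 1)) :
    Res.d t (Finsupp.single b 1) =
      homogenize (Res.deg t) (Res.deg (t + 1) b) (Res.scalarD t (Finsupp.single b 1)) := by
  ext1 c
  obtain ⟨k, hk, hne⟩ := Res.graded_d t b c
  rw [homogenize_apply, Res.scalarD_single_apply hk fun h => (hne h).1, hk]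

theorem deg_ne_of_scalarD_ne_zero {t : ℕ} {b : Res.B (t + 1)} {c : Res.B t}
    (h : Res.scalarD t (Finsupp.single b 1) c ≠ 0) : Res.deg t c ≠ Res.deg (t + 1) b := by
  obtain ⟨k, hk, hne⟩ := Res.graded_d t b c
  rw [Res.scalarD_single_apply hk fun h => (hne h).1] at h
  exact (hne h).2

theorem ε_eq_linearCombination :
    Res.ε = Finsupp.linearCombination _ fun b => monomial (Res.deg 0 b) 1 :=
  Finsupp.lhom_ext' fun b => LinearMap.ext_ring (by simp [Res.graded_eps])

theorem ε_homogenize {α : σ →₀ ℕ} {v : Res.B 0 →₀ K} (hv : v ∈ degLE K (Res.deg 0) α) :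
    Res.ε (homogenize (Res.deg 0) α v) =
      monomial α (Finsupp.linearCombination K (fun _ => (1 : K)) v) := by
  rw [← sub_eq_zero]
  refine map_mem_of_forall_single (W := ⊥) (f := Res.ε.restrictScalars K ∘ₗ
    homogenize (Res.deg 0) α - monomial α ∘ₗ Finsupp.linearCombination K fun _ => 1) fun b hb => ?_
  simp only [LinearMap.sub_apply, LinearMap.comp_apply, LinearMap.restrictScalars_apply]
  rw [homogenize_single, ε_eq_linearCombination, Finsupp.linearCombination_single, smul_eq_mul,
    monomial_mul, one_mul, tsub_add_cancel_of_le (mem_degLE.1 hv b hb),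
    Finsupp.linearCombination_single, smul_eq_mul, mul_one]
  exact sub_self _

/-- The frame of a minimal multigraded free resolution. -/
noncomputable def frame : Frame K (σ →₀ ℕ) where
  B := Res.B
  deg := Res.deg
  d := Res.scalarD

theorem frame_isMinimal : Res.frame.IsMinimal := fun _ _ _ => Res.deg_ne_of_scalarD_ne_zero

theorem homogenize_mem_range_d_iff {t : ℕ} {α : σ →₀ ℕ} {v : Res.B t →₀ K}
    (hv : v ∈ degLE K (Res.deg t) α) :
    homogenize (Res.deg t) α v ∈ LinearMap.range (Res.d t) ↔ v ∈ Res.frame.cycles t := by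
  cases t with
  | zero =>
    rw [← Res.exact0, LinearMap.mem_ker, Res.ε_homogenize hv, monomial_eq_zero]
    rfl
  | succ t =>
    rw [← Res.exact, LinearMap.mem_ker,
      map_homogenize (Res.isFiltered_scalarD t) (Res.d_single_eq_homogenize t) hv,
      homogenize_eq_zero_iff]
    rfl

theorem scalarD_mem_cycles (t : ℕ) (v : Res.B (t + 1) →₀ K) :
    Res.scalarD t v ∈ Res.frame.cycles t := by
  refine map_mem_of_forall_single (W := Res.frame.cycles t) fun b _ =>
    (Res.homogenize_mem_range_d_iff (Res.isFiltered_scalarD t b)).1 ?_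
  rw [← d_single_eq_homogenize]
  exact LinearMap.mem_range_self _ _

theorem exists_scalarD_eq {t : ℕ} {α : σ →₀ ℕ} {v : Res.B t →₀ K}
    (hv : v ∈ degLE K (Res.deg t) α) (hcyc : v ∈ Res.frame.cycles t) :
    ∃ w ∈ degLE K (Res.deg (t + 1)) α, Res.scalarD t w = v := by
  obtain ⟨y, hy⟩ := (Res.homogenize_mem_range_d_iff hv).2 hcyc
  refine ⟨component (Res.deg (t + 1)) α y, component_mem_degLE _ _ _, ?_⟩
  rw [← component_map (Res.isFiltered_scalarD t) (Res.d_single_eq_homogenize t), hy,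
    component_homogenize hv, if_pos rfl]

theorem frame_isResolution : Res.frame.IsResolution where
  filtered := Res.isFiltered_scalarD
  d_mem_cycles := Res.scalarD_mem_cycles
  exact _ _ _ hv hcyc := Res.exists_scalarD_eq hv hcyc

theorem monomial_mem_iff (α : σ →₀ ℕ) :
    monomial α (1 : K) ∈ I ↔ ∃ b, Res.deg 0 b ≤ α := by
  have hI : I = Ideal.span ((fun δ => monomial δ (1 : K)) '' Set.range (Res.deg 0)) := by
    rw [← Set.range_comp]
    refine Res.epi.symm.trans ?_
    rw [ε_eq_linearCombination]
    exact Finsupp.range_linearCombination _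
  refine (SetLike.ext_iff.1 hI _).trans (monomial_mem_span_monomial_image_iff.trans ?_)
  exact Set.exists_range_iff

end MinMGFreeRes

section SimplicialChains

variable {R σ κ : Type*} [CommRing R] [LinearOrder κ] (key : σ ↪ κ)

variable (R) in
/-- The sign of the facet `S.erase x` in the boundary of the simplex `S`, whose vertices are
ordered by `key`; `S` need not contain `x`, so that the same sign serves for `insert x S`. -/
def faceSign (x : σ) (S : Finset σ) : R :=
  (-1) ^ (S.filter fun y => key y < key x).card

theorem faceSign_mul_self (x : σ) (S : Finset σ) : faceSign R key x S * faceSign R key x S = 1 := by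
  rw [faceSign, ← pow_add, Even.neg_one_pow ⟨_, rfl⟩]

theorem faceSign_eq_neg_of_forall_lt {x y : σ} {S : Finset σ} (hx : x ∈ S) (hxy : key x < key y)
    (h : ∀ z ∈ S, key z < key y → z = x ∨ key z < key x) :
    faceSign R key y S = -faceSign R key x S := by
  have hfilter : S.filter (fun z => key z < key y) =
      (S.filter fun z => key z < key x).cons x (by simp) := by
    ext z
    simp only [Finset.mem_filter, Finset.mem_cons]
    refine ⟨fun hz => (h z hz.1 hz.2).imp_right fun hzx => ⟨hz.1, hzx⟩, ?_⟩
    rintro (rfl | hz)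
    · exact ⟨hx, hxy⟩
    · exact ⟨hz.1, hz.2.trans hxy⟩
  rw [faceSign, hfilter, Finset.card_cons, pow_succ, mul_neg_one, faceSign]

variable [DecidableEq σ]

theorem faceSign_erase_self (x : σ) (S : Finset σ) :
    faceSign R key x (S.erase x) = faceSign R key x S := by
  rw [faceSign, Finset.filter_erase, Finset.erase_eq_of_notMem (by simp), faceSign]

theorem faceSign_erase_of_lt {x y : σ} {S : Finset σ} (hx : x ∈ S) (h : key x < key y) :
    faceSign R key y (S.erase x) = -faceSign R key y S := by
  have hmem : x ∈ S.filter fun z => key z < key y := Finset.mem_filter.2 ⟨hx, h⟩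
  rw [faceSign, faceSign, Finset.filter_erase, ← Finset.card_erase_add_one hmem, pow_succ,
    mul_neg_one, neg_neg]

theorem faceSign_erase_of_le {x y : σ} {S : Finset σ} (h : key y ≤ key x) :
    faceSign R key y (S.erase x) = faceSign R key y S := by
  rw [faceSign, Finset.filter_erase, Finset.erase_eq_of_notMem (by simp [h]), faceSign]

theorem faceSign_mul_faceSign_insert {p x : σ} {S : Finset σ} (hp : p ∉ S) (hx : x ∈ S) :
    faceSign R key p S * faceSign R key x (insert p S) =
      -(faceSign R key x S * faceSign R key p (S.erase x)) := by
  have hpS := Finset.mem_insert_self p S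
  rcases lt_or_gt_of_ne (key.injective.ne (ne_of_mem_of_not_mem hx hp)) with h | h
  · have herase := faceSign_erase_of_le (R := R) (S := insert p S) key h.le
    rw [Finset.erase_insert hp] at herase
    rw [herase, faceSign_erase_of_lt key hx h]
    ring
  · have herase := faceSign_erase_of_lt (R := R) key hpS h
    rw [Finset.erase_insert hp] at herase
    rw [herase, faceSign_erase_of_le key h.le]
    ring

variable (R) in
/-- The boundary operator on the simplicial chains of the full simplex on `σ`, augmented by the
empty simplex. -/
noncomputable def boundary : (Finset σ →₀ R) →ₗ[R] (Finset σ →₀ R) :=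
  Finsupp.linearCombination R fun S => ∑ x ∈ S, Finsupp.single (S.erase x) (faceSign R key x S)

variable (R) in
/-- The cone operator with apex `p` on the simplicial chains of the full simplex on `σ`. -/
noncomputable def cone (p : σ) : (Finset σ →₀ R) →ₗ[R] (Finset σ →₀ R) :=
  Finsupp.linearCombination R fun S =>
    if p ∈ S then 0 else Finsupp.single (insert p S) (faceSign R key p S)

theorem boundary_single (S : Finset σ) (r : R) : boundary R key (Finsupp.single S r) =
    ∑ x ∈ S, Finsupp.single (S.erase x) (r * faceSign R key x S) := by
  simp [boundary, Finset.smul_sum]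

theorem cone_single_of_mem {p : σ} {S : Finset σ} (hp : p ∈ S) (r : R) :
    cone R key p (Finsupp.single S r) = 0 := by
  simp [cone, hp]

theorem cone_single_of_notMem {p : σ} {S : Finset σ} (hp : p ∉ S) (r : R) :
    cone R key p (Finsupp.single S r) = Finsupp.single (insert p S) (r * faceSign R key p S) := by
  simp [cone, hp]

theorem exists_of_boundary_apply_ne_zero {v : Finset σ →₀ R} {U : Finset σ}
    (h : boundary R key v U ≠ 0) : ∃ T, v T ≠ 0 ∧ ∃ x ∈ T, T.erase x = U := by
  obtain ⟨T, hT, hU⟩ := exists_single_apply_ne_zero h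
  rw [boundary_single, Finsupp.finsetSum_apply] at hU
  obtain ⟨x, hx, hxU⟩ := Finset.exists_ne_zero_of_sum_ne_zero hU
  exact ⟨T, hT, x, hx, of_not_not fun hne => hxU (Finsupp.single_eq_of_ne' hne)⟩

theorem exists_of_cone_apply_ne_zero {p : σ} {v : Finset σ →₀ R} {U : Finset σ}
    (h : cone R key p v U ≠ 0) : ∃ T, v T ≠ 0 ∧ p ∉ T ∧ insert p T = U := by
  obtain ⟨T, hT, hU⟩ := exists_single_apply_ne_zero h
  have hp : p ∉ T := fun hp => hU (by rw [cone_single_of_mem key hp, Finsupp.zero_apply])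
  rw [cone_single_of_notMem key hp] at hU
  exact ⟨T, hT, hp, of_not_not fun hne => hU (Finsupp.single_eq_of_ne' hne)⟩

theorem boundary_cone_single_of_notMem {p : σ} {S : Finset σ} (hp : p ∉ S) :
    boundary R key (cone R key p (Finsupp.single S 1)) +
      cone R key p (boundary R key (Finsupp.single S 1)) = Finsupp.single S 1 := by
  rw [cone_single_of_notMem key hp, boundary_single, Finset.sum_insert hp, boundary_single, map_sum,
    add_assoc, ← Finset.sum_add_distrib, Finset.sum_eq_zero, add_zero,
    ← faceSign_erase_self key p (insert p S), Finset.erase_insert hp, one_mul, faceSign_mul_self]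
  intro x hx
  have hpe : p ∉ S.erase x := fun h => hp (Finset.mem_of_mem_erase h)
  rw [cone_single_of_notMem key hpe, Finset.erase_insert_of_ne (ne_of_mem_of_not_mem hx hp).symm,
    ← Finsupp.single_add, one_mul, one_mul, faceSign_mul_faceSign_insert key hp hx, neg_add_cancel,
    Finsupp.single_zero]

theorem boundary_cone_single_of_mem {p : σ} {S : Finset σ} (hp : p ∈ S) :
    boundary R key (cone R key p (Finsupp.single S 1)) +
      cone R key p (boundary R key (Finsupp.single S 1)) = Finsupp.single S 1 := by
  rw [cone_single_of_mem key hp, map_zero, zero_add, boundary_single, map_sum,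
    Finset.sum_eq_single_of_mem p hp fun x _ hx =>
      cone_single_of_mem key (Finset.mem_erase_of_ne_of_mem hx.symm hp) _,
    cone_single_of_notMem key (Finset.notMem_erase p S), Finset.insert_erase hp,
    faceSign_erase_self, one_mul, faceSign_mul_self]

theorem boundary_cone_add_cone_boundary (p : σ) (v : Finset σ →₀ R) :
    boundary R key (cone R key p v) + cone R key p (boundary R key v) = v := by
  suffices boundary R key ∘ₗ cone R key p + cone R key p ∘ₗ boundary R key = LinearMap.id from
    LinearMap.congr_fun this v
  refine Finsupp.lhom_ext' fun S => LinearMap.ext_ring ?_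
  by_cases hp : p ∈ S
  · exact boundary_cone_single_of_mem key hp
  · exact boundary_cone_single_of_notMem key hp

theorem boundary_cone (p : σ) (v : Finset σ →₀ R) :
    boundary R key (cone R key p v) = v - cone R key p (boundary R key v) :=
  eq_sub_of_add_eq (boundary_cone_add_cone_boundary key p v)

theorem boundary_boundary (v : Finset σ →₀ R) : boundary R key (boundary R key v) = 0 := by
  suffices ∀ S : Finset σ, boundary R key (boundary R key (Finsupp.single S 1)) = 0 from
    map_mem_of_forall_single (f := boundary R key ∘ₗ boundary R key) (W := ⊥) fun S _ => this S
  intro S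
  induction S using Finset.induction_on with
  | empty => simp [boundary_single]
  | insert p S hp ih =>
    have hcone : Finsupp.single (insert p S) (1 : R) =
        cone R key p (faceSign R key p S • Finsupp.single S 1) := by
      rw [Finsupp.smul_single, smul_eq_mul, mul_one, cone_single_of_notMem key hp,
        faceSign_mul_self]
    rw [hcone, boundary_cone, map_sub, boundary_cone, map_smul, map_smul, ih]
    simp

end SimplicialChains

section SquarefreeExponent

variable {σ : Type*}

/-- The exponent vector of the squarefree monomial `∏ x ∈ S, X x`. -/
noncomputable def squarefreeExponent (S : Finset σ) : σ →₀ ℕ :=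
  ∑ x ∈ S, Finsupp.single x 1

open Classical in
theorem squarefreeExponent_apply (S : Finset σ) (x : σ) :
    squarefreeExponent S x = if x ∈ S then 1 else 0 := by
  simp [squarefreeExponent, Finsupp.finsetSum_apply, Finsupp.single_apply]

theorem squarefreeExponent_le_iff {S : Finset σ} {α : σ →₀ ℕ} :
    squarefreeExponent S ≤ α ↔ ∀ x ∈ S, α x ≠ 0 := by
  classical
  refine forall_congr' fun x => ?_
  rw [squarefreeExponent_apply]
  split_ifs with hx
  · simp [hx, Nat.one_le_iff_ne_zero]
  · simp [hx]

theorem squarefreeExponent_le_squarefreeExponent {S T : Finset σ} :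
    squarefreeExponent S ≤ squarefreeExponent T ↔ S ⊆ T := by
  classical
  simp only [squarefreeExponent_le_iff, squarefreeExponent_apply, ne_eq, ite_eq_right_iff,
    one_ne_zero, imp_false, not_not, Finset.subset_iff]

theorem squarefreeExponent_injective :
    Function.Injective (squarefreeExponent : Finset σ → σ →₀ ℕ) := fun _ _ h =>
  (squarefreeExponent_le_squarefreeExponent.1 h.le).antisymm
    (squarefreeExponent_le_squarefreeExponent.1 h.ge)

end SquarefreeExponent

section Cells

variable {P Q : Type*}

/-- The sets of pairs meeting every row `{i} × Q`. -/
def IsFull (S : Finset (P × Q)) : Prop :=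
  ∀ i, ∃ a, (i, a) ∈ S

/-- The sets of pairs such that every graph they contain is that of a function in `𝔄`. They form
a simplicial complex, in which the sets that are not full form a subcomplex. -/
def IsAdmissible (𝔄 : Set (P → Q)) (S : Finset (P × Q)) : Prop :=
  ∀ g : P → Q, (∀ i, (i, g i) ∈ S) → g ∈ 𝔄

/-- The cells indexing the basis of the explicit resolution of the ideal generated by the
monomials of the graphs of the functions in `𝔄`. -/
structure IsCell (𝔄 : Set (P → Q)) (S : Finset (P × Q)) : Prop where
  isFull : IsFull S
  isAdmissible : IsAdmissible 𝔄 S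

variable {𝔄 : Set (P → Q)} {S T : Finset (P × Q)}

theorem IsFull.mono (hS : IsFull S) (h : S ⊆ T) : IsFull T := fun i =>
  (hS i).imp fun _ ha => h ha

theorem IsAdmissible.mono (hT : IsAdmissible 𝔄 T) (h : S ⊆ T) : IsAdmissible 𝔄 S := fun g hg =>
  hT g fun i => h (hg i)

section Graph

variable [Fintype P]

/-- The graph of a function, as a finite set of pairs. -/
def graphFinset (f : P → Q) : Finset (P × Q) :=
  Finset.univ.map ⟨fun i => (i, f i), fun _ _ h => congrArg Prod.fst h⟩

theorem mem_graphFinset {f : P → Q} {x : P × Q} : x ∈ graphFinset f ↔ x.2 = f x.1 := by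
  refine Finset.mem_map.trans ⟨?_, fun h => ⟨x.1, Finset.mem_univ _, Prod.ext rfl h.symm⟩⟩
  rintro ⟨i, -, rfl⟩
  rfl

theorem card_graphFinset (f : P → Q) : (graphFinset f).card = Fintype.card P :=
  Finset.card_map _

theorem IsFull.eq_graphFinset {f : P → Q} (hS : IsFull S) (h : ∀ x ∈ S, x.2 = f x.1) :
    S = graphFinset f := by
  ext x
  rw [mem_graphFinset]
  refine ⟨h x, fun hx => ?_⟩
  obtain ⟨a, ha⟩ := hS x.1
  have hax : a = x.2 := (h _ ha).trans hx.symm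
  rwa [hax] at ha

end Graph

theorem exists_fst_eq_fst_snd_lt_snd [Fintype P] [LinearOrder Q]
    (hcard : S.card = Fintype.card P + 1) : ∃ x ∈ S, ∃ y ∈ S, x.1 = y.1 ∧ x.2 < y.2 := by
  obtain ⟨x, hx, y, hy, hne, hrow⟩ := Finset.exists_ne_map_eq_of_card_lt_of_maps_to
    (s := S) (t := Finset.univ) (f := Prod.fst) (by simp [hcard]) fun _ _ => by simp
  rcases lt_or_gt_of_ne fun h => hne (Prod.ext hrow h) with h | h
  · exact ⟨x, hx, y, hy, hrow, h⟩
  · exact ⟨y, hy, x, hx, hrow.symm, h⟩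

section Full

theorem IsFull.image_fst [DecidableEq P] [Fintype P] (hS : IsFull S) :
    S.image Prod.fst = Finset.univ :=
  Finset.eq_univ_of_forall fun i => by simpa using hS i

theorem IsFull.card_le [Fintype P] (hS : IsFull S) : Fintype.card P ≤ S.card := by
  classical
  rw [← Finset.card_univ, ← hS.image_fst]
  exact Finset.card_image_le

theorem IsFull.injOn_fst [Fintype P] (hS : IsFull S) (hcard : S.card = Fintype.card P) :
    Set.InjOn Prod.fst (S : Set (P × Q)) := by
  classical
  exact Finset.card_image_iff.1 (by rw [hS.image_fst, Finset.card_univ, hcard])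

variable [DecidableEq P] [DecidableEq Q]

theorem isFull_erase_iff (hS : IsFull S) {z : P × Q} :
    IsFull (S.erase z) ↔ ∃ y ∈ S, y ≠ z ∧ y.1 = z.1 := by
  refine ⟨fun h => ?_, fun ⟨y, hy, hyz, hrow⟩ i => ?_⟩
  · obtain ⟨a, ha⟩ := h z.1
    exact ⟨_, Finset.mem_of_mem_erase ha, Finset.ne_of_mem_erase ha, rfl⟩
  · obtain rfl | hi := eq_or_ne i z.1
    · exact ⟨y.2, Finset.mem_erase.2 ⟨fun h => hyz (by rw [← h, ← hrow]), hrow ▸ hy⟩⟩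
    · obtain ⟨a, ha⟩ := hS i
      exact ⟨a, Finset.mem_erase.2 ⟨fun h => hi (by rw [← h]), ha⟩⟩

theorem isFull_of_isFull_insert {p z : P × Q} (h : IsFull (insert p S)) (hz : z ∈ S)
    (hrow : z.1 = p.1) : IsFull S := by
  by_cases hp : p ∈ S
  · rwa [Finset.insert_eq_of_mem hp] at h
  · rw [← Finset.erase_insert hp, isFull_erase_iff h]
    exact ⟨z, Finset.mem_insert_of_mem hz, ne_of_mem_of_not_mem hz hp, hrow⟩

theorem IsFull.eq_or_eq_of_isFull_erase [Fintype P] (hS : IsFull S)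
    (hcard : S.card = Fintype.card P + 1) {x y z : P × Q} (hx : x ∈ S) (hy : y ∈ S)
    (hxy : x ≠ y) (hrow : x.1 = y.1) (hz : z ∈ S) (h : IsFull (S.erase z)) : z = x ∨ z = y := by
  have hyx : y ∈ S.erase x := Finset.mem_erase.2 ⟨hxy.symm, hy⟩
  have hinj : Set.InjOn Prod.fst (S.erase x : Set (P × Q)) :=
    ((isFull_erase_iff hS).2 ⟨y, hy, hxy.symm, hrow.symm⟩).injOn_fst (by
      rw [Finset.card_erase_of_mem hx, hcard, Nat.add_sub_cancel])
  obtain ⟨w, hw, hwz, hwrow⟩ := (isFull_erase_iff hS).1 h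
  refine or_iff_not_imp_left.2 fun hzx => ?_
  have hzx' : z ∈ S.erase x := Finset.mem_erase.2 ⟨hzx, hz⟩
  obtain rfl | hwx := eq_or_ne w x
  · exact hinj hzx' hyx (hwrow.symm.trans hrow)
  · exact absurd (hinj (Finset.mem_erase.2 ⟨hwx, hw⟩) hzx' hwrow) hwz

end Full

theorem boundary_apply_congr_of_isFull {R : Type*} [CommRing R] [LinearOrder P] [LinearOrder Q]
    {v w : Finset (P × Q) →₀ R} (h : ∀ T, IsFull T → v T = w T) {U : Finset (P × Q)}
    (hU : IsFull U) :
    boundary R toLex.toEmbedding v U = boundary R toLex.toEmbedding w U := by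
  rw [← sub_eq_zero, ← Finsupp.sub_apply, ← map_sub]
  by_contra hne
  obtain ⟨T, hT, x, -, rfl⟩ := exists_of_boundary_apply_ne_zero _ hne
  exact hT (sub_eq_zero.2 (h T (hU.mono (Finset.erase_subset _ _))))

end Cells

section CellFrame

variable {R P Q : Type*} [CommRing R] [Fintype P]
  {𝔄 : Set (P → Q)} {t : ℕ}

/-- The cells of dimension `t`, a cell of dimension `0` being a graph. -/
abbrev Cell (𝔄 : Set (P → Q)) (t : ℕ) : Type _ :=
  {S : Finset (P × Q) // IsCell 𝔄 S ∧ S.card = Fintype.card P + t}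

variable (R) in
/-- The cellular chains as simplicial chains of the full simplex on `P × Q`. -/
noncomputable def cellChain (𝔄 : Set (P → Q)) (t : ℕ) :
    (Cell 𝔄 t →₀ R) →ₗ[R] (Finset (P × Q) →₀ R) :=
  Finsupp.lmapDomain R R Subtype.val

variable (R) in
/-- The part of a simplicial chain supported on the cells of dimension `t`. -/
noncomputable def cellPart (𝔄 : Set (P → Q)) (t : ℕ) :
    (Finset (P × Q) →₀ R) →ₗ[R] (Cell 𝔄 t →₀ R) :=
  Finsupp.lsubtypeDomain {S | IsCell 𝔄 S ∧ S.card = Fintype.card P + t}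

theorem cellChain_single (S : Cell 𝔄 t) (r : R) :
    cellChain R 𝔄 t (Finsupp.single S r) = Finsupp.single S.1 r :=
  Finsupp.mapDomain_single

theorem cellChain_apply_val (v : Cell 𝔄 t →₀ R) (S : Cell 𝔄 t) : cellChain R 𝔄 t v S.1 = v S :=
  Finsupp.mapDomain_apply Subtype.val_injective v S

theorem cellPart_cellChain (v : Cell 𝔄 t →₀ R) : cellPart R 𝔄 t (cellChain R 𝔄 t v) = v :=
  Finsupp.ext fun S => cellChain_apply_val v S

theorem exists_of_cellChain_apply_ne_zero {v : Cell 𝔄 t →₀ R} {T : Finset (P × Q)}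
    (h : cellChain R 𝔄 t v T ≠ 0) : ∃ S : Cell 𝔄 t, v S ≠ 0 ∧ S.1 = T := by
  have hT : T ∈ Set.range (Subtype.val : Cell 𝔄 t → Finset (P × Q)) :=
    of_not_not fun hT => h (Finsupp.mapDomain_of_notMem_range v T hT)
  obtain ⟨S, rfl⟩ := hT
  exact ⟨S, by rwa [cellChain_apply_val] at h, rfl⟩

theorem cellChain_cellPart_apply {v : Finset (P × Q) →₀ R} {T : Finset (P × Q)}
    (h : v T ≠ 0 → IsCell 𝔄 T ∧ T.card = Fintype.card P + t) :
    cellChain R 𝔄 t (cellPart R 𝔄 t v) T = v T := by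
  by_cases hT : IsCell 𝔄 T ∧ T.card = Fintype.card P + t
  · exact cellChain_apply_val _ (⟨T, hT⟩ : Cell 𝔄 t)
  · have hv : v T = 0 := of_not_not fun h' => hT (h h')
    rw [hv]
    by_contra hne
    obtain ⟨S, -, rfl⟩ := exists_of_cellChain_apply_ne_zero hne
    exact hT S.2

theorem Cell.erase_of_isFull [DecidableEq P] [DecidableEq Q] (T : Cell 𝔄 (t + 1)) {x : P × Q}
    (hx : x ∈ T.1) (h : IsFull (T.1.erase x)) :
    IsCell 𝔄 (T.1.erase x) ∧ (T.1.erase x).card = Fintype.card P + t :=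
  ⟨⟨h, T.2.1.isAdmissible.mono (Finset.erase_subset _ _)⟩, by
    rw [Finset.card_erase_of_mem hx, T.2.2, ← add_assoc, Nat.add_sub_cancel]⟩

theorem cellPart_single_eq_zero {U : Finset (P × Q)} (hU : ¬IsFull U) (r : R) :
    cellPart R 𝔄 t (Finsupp.single U r) = 0 :=
  Finsupp.ext fun S => Finsupp.single_eq_of_ne fun h => hU (h ▸ S.2.1.isFull)

theorem sum_cellPart_single (S : Cell 𝔄 t) (r : R) :
    Finsupp.linearCombination R (fun _ => (1 : R)) (cellPart R 𝔄 t (Finsupp.single S.1 r)) = r := by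
  rw [← cellChain_single, cellPart_cellChain, Finsupp.linearCombination_single, smul_eq_mul,
    mul_one]

variable [LinearOrder P] [LinearOrder Q]

variable (R) in
/-- The differential of the cellular chain complex of the sets that are `IsAdmissible`, relative
to the subcomplex of those that are not `IsFull`. -/
noncomputable def cellBoundary (𝔄 : Set (P → Q)) (t : ℕ) :
    (Cell 𝔄 (t + 1) →₀ R) →ₗ[R] (Cell 𝔄 t →₀ R) :=
  cellPart R 𝔄 t ∘ₗ boundary R toLex.toEmbedding ∘ₗ cellChain R 𝔄 (t + 1)

theorem exists_of_boundary_cellChain_apply_ne_zero {v : Cell 𝔄 t →₀ R} {U : Finset (P × Q)}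
    (h : boundary R toLex.toEmbedding (cellChain R 𝔄 t v) U ≠ 0) :
    ∃ T : Cell 𝔄 t, v T ≠ 0 ∧ ∃ x ∈ T.1, T.1.erase x = U := by
  obtain ⟨T, hT, x, hx, rfl⟩ := exists_of_boundary_apply_ne_zero _ h
  obtain ⟨T, hvT, rfl⟩ := exists_of_cellChain_apply_ne_zero hT
  exact ⟨T, hvT, x, hx, rfl⟩

theorem cellBoundary_cellBoundary (v : Cell 𝔄 (t + 2) →₀ R) :
    cellBoundary R 𝔄 t (cellBoundary R 𝔄 (t + 1) v) = 0 := by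
  ext S
  change boundary R toLex.toEmbedding (cellChain R 𝔄 (t + 1) (cellPart R 𝔄 (t + 1) _)) S.1 = 0
  rw [boundary_apply_congr_of_isFull (fun T hT => cellChain_cellPart_apply fun hne => ?_)
    S.2.1.isFull, LinearMap.comp_apply, boundary_boundary, Finsupp.zero_apply]
  obtain ⟨U, -, x, hx, rfl⟩ := exists_of_boundary_cellChain_apply_ne_zero hne
  exact U.erase_of_isFull hx hT

theorem faceSign_eq_neg_of_same_row {S : Finset (P × Q)} (hS : IsFull S)
    (hcard : S.card = Fintype.card P + 1) {x y : P × Q} (hx : x ∈ S) (hy : y ∈ S)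
    (hrow : x.1 = y.1) (hlt : x.2 < y.2) :
    faceSign R toLex.toEmbedding y S = -faceSign R toLex.toEmbedding x S := by
  have hxy : x ≠ y := fun h => hlt.ne (congrArg Prod.snd h)
  refine faceSign_eq_neg_of_forall_lt _ hx
    (Prod.Lex.toLex_lt_toLex.2 (Or.inr ⟨hrow, hlt⟩)) fun z hz hzy => ?_
  rcases Prod.Lex.toLex_lt_toLex.1 hzy with h | ⟨hzrow, hzlt⟩
  · exact Or.inr (Prod.Lex.toLex_lt_toLex.2 (Or.inl (hrow ▸ h)))
  · have hzy' : y ≠ z := fun h => hzlt.ne (congrArg Prod.snd h.symm)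
    have hfull : IsFull (S.erase z) := (isFull_erase_iff hS).2 ⟨y, hy, hzy', hzrow.symm⟩
    exact Or.inl ((hS.eq_or_eq_of_isFull_erase hcard hx hy hxy hrow hz hfull).resolve_right
      hzy'.symm)

theorem sum_cellBoundary_single (S : Cell 𝔄 1) :
    Finsupp.linearCombination R (fun _ => (1 : R))
      (cellBoundary R 𝔄 0 (Finsupp.single S 1)) = 0 := by
  have hS := S.2.1.isFull
  obtain ⟨x, hx, y, hy, hrow, hlt⟩ := exists_fst_eq_fst_snd_lt_snd S.2.2
  have hxy : x ≠ y := fun h => hlt.ne (congrArg Prod.snd h)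
  let faceX : Cell 𝔄 0 := ⟨_, S.erase_of_isFull hx
    ((isFull_erase_iff hS).2 ⟨y, hy, hxy.symm, hrow.symm⟩)⟩
  let faceY : Cell 𝔄 0 := ⟨_, S.erase_of_isFull hy ((isFull_erase_iff hS).2 ⟨x, hx, hxy, hrow⟩)⟩
  rw [cellBoundary, LinearMap.comp_apply, LinearMap.comp_apply, cellChain_single, boundary_single,
    map_sum, Finset.sum_eq_add_of_mem x y hx hy hxy fun z hz hne =>
      cellPart_single_eq_zero (fun h => not_or.2 hne
        (hS.eq_or_eq_of_isFull_erase S.2.2 hx hy hxy hrow hz h)) _,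
    map_add, sum_cellPart_single faceX, sum_cellPart_single faceY,
    faceSign_eq_neg_of_same_row hS S.2.2 hx hy hrow hlt, mul_neg, add_neg_cancel]

variable (R) in
/-- The frame of the explicit resolution. -/
noncomputable def cellFrame (𝔄 : Set (P → Q)) : Frame R (P × Q →₀ ℕ) where
  B := Cell 𝔄
  deg _ S := squarefreeExponent S.1
  d := cellBoundary R 𝔄

theorem cellBoundary_mem_cycles (t : ℕ) (v : Cell 𝔄 (t + 1) →₀ R) :
    cellBoundary R 𝔄 t v ∈ (cellFrame R 𝔄).cycles t := by
  cases t with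
  | zero => exact map_mem_of_forall_single fun S _ => sum_cellBoundary_single S
  | succ t => exact cellBoundary_cellBoundary v

theorem exists_of_cellBoundary_single_apply_ne_zero {S : Cell 𝔄 (t + 1)} {T : Cell 𝔄 t}
    (h : cellBoundary R 𝔄 t (Finsupp.single S 1) T ≠ 0) : ∃ x ∈ S.1, S.1.erase x = T.1 := by
  obtain ⟨S', hS', hT⟩ := exists_of_boundary_cellChain_apply_ne_zero h
  rwa [of_not_not fun hne => hS' (Finsupp.single_eq_of_ne hne)] at hT

theorem isFiltered_cellBoundary (t : ℕ) :
    IsFiltered ((cellFrame R 𝔄).deg (t + 1)) ((cellFrame R 𝔄).deg t) (cellBoundary R 𝔄 t) := by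
  refine fun S => mem_degLE.2 fun T hT => ?_
  obtain ⟨x, -, hx⟩ := exists_of_cellBoundary_single_apply_ne_zero hT
  exact squarefreeExponent_le_squarefreeExponent.2 (hx ▸ Finset.erase_subset _ _)

theorem cellFrame_isMinimal (𝔄 : Set (P → Q)) : (cellFrame R 𝔄).IsMinimal := by
  intro t S T hT heq
  obtain ⟨x, hxS, hx⟩ := exists_of_cellBoundary_single_apply_ne_zero hT
  exact Finset.notMem_erase x S.1 (by rwa [hx, squarefreeExponent_injective heq])

end CellFrame

section UpdateClosed

variable {P Q : Type*} [LinearOrder P]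

/-- The closure property of a set `𝔄` of functions that makes coning off the values of a least
function one by one preserve admissibility: where a function of `𝔄` first exceeds a smaller one,
it may be lowered to it. -/
def UpdateClosed [Preorder Q] (𝔄 : Set (P → Q)) : Prop :=
  ∀ f ∈ 𝔄, ∀ g ∈ 𝔄, f ≤ g → ∀ i, (∀ j < i, f j = g j) → Function.update g i (f i) ∈ 𝔄

theorem UpdateClosed.isAdmissible_insert [Preorder Q] [DecidableEq Q] {𝔄 : Set (P → Q)}
    (hupd : UpdateClosed 𝔄) {S : Finset (P × Q)} (hS : IsCell 𝔄 S) {f : P → Q} (hf : f ∈ 𝔄)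
    (hle : ∀ g, (∀ i, (i, g i) ∈ S) → f ≤ g) {i : P}
    (hagree : ∀ x ∈ S, x.1 < i → x.2 = f x.1) : IsAdmissible 𝔄 (insert (i, f i) S) := by
  intro h hh
  obtain ⟨a, ha⟩ := hS.isFull i
  have hSg : ∀ j, (j, Function.update h i a j) ∈ S := fun j => by
    obtain rfl | hj := eq_or_ne j i
    · rwa [Function.update_self]
    · rw [Function.update_of_ne hj]
      exact (Finset.mem_insert.1 (hh j)).resolve_left fun heq => hj (congrArg Prod.fst heq)
  by_cases hi : (i, h i) ∈ S
  · exact hS.isAdmissible h fun j => (Finset.mem_insert.1 (hh j)).elim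
      (fun heq => by obtain rfl := congrArg Prod.fst heq; exact hi) id
  · have hhi : h i = f i :=
      congrArg Prod.snd ((Finset.mem_insert.1 (hh i)).resolve_right hi)
    have := hupd f hf _ (hS.isAdmissible _ hSg) (hle _ hSg) i fun j hj =>
      (hagree _ (hSg j) hj).symm
    rwa [Function.update_idem, ← hhi, Function.update_eq_self] at this

end UpdateClosed

theorem exists_isLeast_of_infClosed {α : Type*} [SemilatticeInf α] {s : Set α} (hs : InfClosed s)
    (hfin : s.Finite) (hne : s.Nonempty) : ∃ a, IsLeast s a := by
  obtain ⟨a, ha⟩ := hfin.exists_minimal hne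
  exact ⟨a, ha.prop, fun b hb => (ha.le_of_le (hs ha.prop hb) inf_le_left).trans inf_le_right⟩

theorem IsCell.exists_isLeast {P Q : Type*} [Finite P] [LinearOrder Q] {𝔄 : Set (P → Q)}
    (hinf : InfClosed 𝔄) {S : Finset (P × Q)} (hS : IsCell 𝔄 S) {α : P × Q →₀ ℕ}
    (hα : squarefreeExponent S ≤ α) : ∃ f, IsLeast {g ∈ 𝔄 | ∀ j, α (j, g j) ≠ 0} f := by
  refine exists_isLeast_of_infClosed (fun g hg h hh => ⟨hinf hg.1 hh.1, fun j => ?_⟩) ?_ ?_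
  · rcases min_choice (g j) (h j) with hj | hj
    · rw [Pi.inf_apply, hj]; exact hg.2 j
    · rw [Pi.inf_apply, hj]; exact hh.2 j
  · refine (Set.Finite.pi' fun j => (α.hasFiniteSupport.preimage
      (Prod.mk_right_injective j).injOn)).subset fun g hg j => hg.2 j
  · choose g hg using hS.isFull
    exact ⟨g, hS.isAdmissible g hg, fun j => squarefreeExponent_le_iff.1 hα _ (hg j)⟩

section Exactness

variable {R P Q : Type*} [CommRing R] [Fintype P] [LinearOrder P] [LinearOrder Q]
  {𝔄 : Set (P → Q)} {t : ℕ}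

theorem boundary_cellChain_apply_eq_zero_of_mem_cycles {u : Cell 𝔄 t →₀ R}
    (hu : u ∈ (cellFrame R 𝔄).cycles t) {U : Finset (P × Q)} (hU : IsFull U) :
    boundary R toLex.toEmbedding (cellChain R 𝔄 t u) U = 0 := by
  by_contra hne
  obtain ⟨T, -, x, hx, rfl⟩ := exists_of_boundary_cellChain_apply_ne_zero hne
  cases t with
  | zero =>
    have hlt : (T.1.erase x).card < Fintype.card P :=
      (Finset.card_erase_lt_of_mem hx).trans_eq T.2.2
    exact hU.card_le.not_gt hlt
  | succ t => exact hne (DFunLike.congr_fun hu (⟨_, T.erase_of_isFull hx hU⟩ : Cell 𝔄 t))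

variable (R) in
/-- The cone operator on cellular chains. -/
noncomputable def cellCone (𝔄 : Set (P → Q)) (t : ℕ) (p : P × Q) :
    (Cell 𝔄 t →₀ R) →ₗ[R] (Cell 𝔄 (t + 1) →₀ R) :=
  cellPart R 𝔄 (t + 1) ∘ₗ cone R toLex.toEmbedding p ∘ₗ cellChain R 𝔄 t

theorem exists_of_cone_cellChain_apply_ne_zero {u : Cell 𝔄 t →₀ R} {p : P × Q}
    {U : Finset (P × Q)} (h : cone R toLex.toEmbedding p (cellChain R 𝔄 t u) U ≠ 0) :
    ∃ T : Cell 𝔄 t, u T ≠ 0 ∧ p ∉ T.1 ∧ insert p T.1 = U := by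
  obtain ⟨T, hT, hp, rfl⟩ := exists_of_cone_apply_ne_zero _ h
  obtain ⟨T, huT, rfl⟩ := exists_of_cellChain_apply_ne_zero hT
  exact ⟨T, huT, hp, rfl⟩

theorem cellChain_cellCone {u : Cell 𝔄 t →₀ R} {p : P × Q}
    (hadm : ∀ T, u T ≠ 0 → IsAdmissible 𝔄 (insert p T.1)) :
    cellChain R 𝔄 (t + 1) (cellCone R 𝔄 t p u) =
      cone R toLex.toEmbedding p (cellChain R 𝔄 t u) := by
  refine Finsupp.ext fun U => cellChain_cellPart_apply fun hU => ?_
  obtain ⟨T, hT, hp, rfl⟩ := exists_of_cone_cellChain_apply_ne_zero hU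
  exact ⟨⟨T.2.1.isFull.mono (Finset.subset_insert _ _), hadm T hT⟩, by
    rw [Finset.card_insert_of_notMem hp, T.2.2, add_assoc]⟩

theorem sub_cellBoundary_cellCone {u : Cell 𝔄 t →₀ R} {p : P × Q}
    (hadm : ∀ T, u T ≠ 0 → IsAdmissible 𝔄 (insert p T.1)) :
    u - cellBoundary R 𝔄 t (cellCone R 𝔄 t p u) = cellPart R 𝔄 t
      (cone R toLex.toEmbedding p (boundary R toLex.toEmbedding (cellChain R 𝔄 t u))) := by
  rw [cellBoundary, LinearMap.comp_apply, LinearMap.comp_apply, cellChain_cellCone hadm,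
    boundary_cone, map_sub, cellPart_cellChain, sub_sub_cancel]

theorem exists_of_sub_cellBoundary_cellCone_apply_ne_zero {u : Cell 𝔄 t →₀ R}
    (hu : u ∈ (cellFrame R 𝔄).cycles t) {p : P × Q}
    (hadm : ∀ T, u T ≠ 0 → IsAdmissible 𝔄 (insert p T.1)) {S : Cell 𝔄 t}
    (hS : (u - cellBoundary R 𝔄 t (cellCone R 𝔄 t p u)) S ≠ 0) :
    ∃ T, u T ≠ 0 ∧ ∃ x ∈ T.1, ¬IsFull (T.1.erase x) ∧ insert p (T.1.erase x) = S.1 := by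
  rw [sub_cellBoundary_cellCone hadm] at hS
  obtain ⟨U, hU, -, hUS⟩ := exists_of_cone_apply_ne_zero _ hS
  obtain ⟨T, hT, x, hx, rfl⟩ := exists_of_boundary_cellChain_apply_ne_zero hU
  exact ⟨T, hT, x, hx,
    fun hfull => hU (boundary_cellChain_apply_eq_zero_of_mem_cycles hu hfull), hUS⟩

/-- A chain agrees with `f` over `J` when the cells it involves contain no point over `J` that is
off the graph of `f`. -/
def AgreesOver (f : P → Q) (J : Finset P) (u : Cell 𝔄 t →₀ R) : Prop :=
  ∀ S, u S ≠ 0 → ∀ x ∈ S.1, x.1 ∈ J → x.2 = f x.1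

variable {f : P → Q} {α : P × Q →₀ ℕ} {J : Finset P} {i : P} {u : Cell 𝔄 t →₀ R}

theorem isAdmissible_insert_of_agreesOver (hupd : UpdateClosed 𝔄)
    (hf : IsLeast {g ∈ 𝔄 | ∀ j, α (j, g j) ≠ 0} f)
    (hα : u ∈ degLE R ((cellFrame R 𝔄).deg t) α) (hagree : AgreesOver f J u)
    (hJ : ∀ j < i, j ∈ J) {S : Cell 𝔄 t} (hS : u S ≠ 0) :
    IsAdmissible 𝔄 (insert (i, f i) S.1) :=
  hupd.isAdmissible_insert S.2.1 hf.1.1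
    (fun g hg => hf.2 ⟨S.2.1.isAdmissible g hg, fun j =>
      squarefreeExponent_le_iff.1 (mem_degLE.1 hα S hS) _ (hg j)⟩)
    fun x hx hxi => hagree S hS x hx (hJ _ hxi)

theorem exists_agreesOver_insert (hupd : UpdateClosed 𝔄)
    (hf : IsLeast {g ∈ 𝔄 | ∀ j, α (j, g j) ≠ 0} f) (hu : u ∈ (cellFrame R 𝔄).cycles t)
    (hα : u ∈ degLE R ((cellFrame R 𝔄).deg t) α) (hagree : AgreesOver f J u)
    (hJ : ∀ j < i, j ∈ J) :
    ∃ w : Cell 𝔄 (t + 1) →₀ R, w ∈ degLE R ((cellFrame R 𝔄).deg (t + 1)) α ∧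
      AgreesOver f (insert i J) (u - cellBoundary R 𝔄 t w) := by
  have hadm : ∀ T, u T ≠ 0 → IsAdmissible 𝔄 (insert (i, f i) T.1) := fun T hT =>
    isAdmissible_insert_of_agreesOver hupd hf hα hagree hJ hT
  refine ⟨cellCone R 𝔄 t (i, f i) u, mem_degLE.2 fun S hS => ?_, fun S hS y hy hyJ => ?_⟩
  · obtain ⟨T, hT, -, hTS⟩ := exists_of_cone_cellChain_apply_ne_zero hS
    refine squarefreeExponent_le_iff.2 (hTS ▸ Finset.forall_mem_insert _ _ _ |>.2 ⟨hf.1.2 i, ?_⟩)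
    exact squarefreeExponent_le_iff.1 (mem_degLE.1 hα T hT)
  · obtain ⟨T, hT, x, -, hnotFull, hTS⟩ :=
      exists_of_sub_cellBoundary_cellCone_apply_ne_zero hu hadm hS
    rw [← hTS] at hy
    obtain rfl | hy := Finset.mem_insert.1 hy
    · rfl
    obtain hyi | hyJ := Finset.mem_insert.1 hyJ
    · exact absurd (isFull_of_isFull_insert (hTS ▸ S.2.1.isFull) hy hyi) hnotFull
    · exact hagree T hT y (Finset.mem_of_mem_erase hy) hyJ

theorem sub_cellBoundary_mem_degLE (hα : u ∈ degLE R ((cellFrame R 𝔄).deg t) α)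
    {w : Cell 𝔄 (t + 1) →₀ R} (hw : w ∈ degLE R ((cellFrame R 𝔄).deg (t + 1)) α) :
    u - cellBoundary R 𝔄 t w ∈ degLE R ((cellFrame R 𝔄).deg t) α :=
  sub_mem hα ((isFiltered_cellBoundary t).map_mem hw)

theorem exists_agreesOver_of_isLowerSet (hupd : UpdateClosed 𝔄)
    (hf : IsLeast {g ∈ 𝔄 | ∀ j, α (j, g j) ≠ 0} f) (hu : u ∈ (cellFrame R 𝔄).cycles t)
    (hα : u ∈ degLE R ((cellFrame R 𝔄).deg t) α) (hJ : IsLowerSet (J : Set P)) :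
    ∃ w : Cell 𝔄 (t + 1) →₀ R, w ∈ degLE R ((cellFrame R 𝔄).deg (t + 1)) α ∧
      AgreesOver f J (u - cellBoundary R 𝔄 t w) := by
  induction J using Finset.induction_on_max with
  | empty => exact ⟨0, zero_mem _, fun _ _ _ _ h => absurd h (Finset.notMem_empty _)⟩
  | insert i J hmax ih =>
    have hbelow : ∀ x ∈ insert i J, ∀ y < x, y ∈ J := fun x hx y hyx => by
      refine (Finset.mem_insert.1 (hJ hyx.le hx)).resolve_left fun hyi => ?_
      obtain rfl | hx := Finset.mem_insert.1 hx
      · exact hyx.ne hyi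
      · exact (hmax x hx).not_gt (hyi ▸ hyx)
    obtain ⟨w, hw, hagree⟩ := ih fun x y hyx hx => hyx.eq_or_lt.elim (fun h => h ▸ hx)
      (hbelow x (Finset.mem_insert_of_mem hx) y)
    obtain ⟨w', hw', hagree'⟩ := exists_agreesOver_insert hupd hf
      (sub_mem hu (cellBoundary_mem_cycles t w)) (sub_cellBoundary_mem_degLE hα hw) hagree
      (hbelow i (Finset.mem_insert_self _ _))
    exact ⟨w + w', add_mem hw hw', by rwa [map_add, ← sub_sub]⟩

theorem eq_zero_of_agreesOver_univ (hu : u ∈ (cellFrame R 𝔄).cycles t)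
    (hagree : AgreesOver f Finset.univ u) : u = 0 := by
  have hgraph : ∀ S, u S ≠ 0 → S.1 = graphFinset f := fun S hS =>
    S.2.1.isFull.eq_graphFinset fun x hx => hagree S hS x hx (Finset.mem_univ _)
  by_contra hne
  obtain ⟨S, hS⟩ := DFunLike.ne_iff.1 hne
  obtain rfl : t = 0 := by
    rw [← Nat.add_left_cancel_iff (n := Fintype.card P), ← S.2.2, hgraph S hS, card_graphFinset,
      add_zero]
  have huS : u = Finsupp.single S (u S) := Finsupp.ext fun T => by
    obtain rfl | hTS := eq_or_ne T S
    · rw [Finsupp.single_eq_same]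
    · rw [Finsupp.single_eq_of_ne hTS]
      exact of_not_not fun hT => hTS (Subtype.ext ((hgraph T hT).trans (hgraph S hS).symm))
  have haug : Finsupp.linearCombination R (fun _ => (1 : R)) u = 0 := hu
  rw [huS, Finsupp.linearCombination_single, smul_eq_mul, mul_one] at haug
  exact hS haug

theorem cellFrame_isResolution (hinf : InfClosed 𝔄) (hupd : UpdateClosed 𝔄) :
    (cellFrame R 𝔄).IsResolution where
  filtered := isFiltered_cellBoundary
  d_mem_cycles := cellBoundary_mem_cycles
  exact t α u hα hu := by
    obtain rfl | hne := eq_or_ne u 0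
    · exact ⟨0, zero_mem _, map_zero _⟩
    obtain ⟨S, hS⟩ := DFunLike.ne_iff.1 hne
    obtain ⟨f, hf⟩ := S.2.1.exists_isLeast hinf (mem_degLE.1 hα S hS)
    obtain ⟨w, hw, hagree⟩ := exists_agreesOver_of_isLowerSet hupd hf hu hα
      (J := Finset.univ) (by simpa using isLowerSet_univ)
    exact ⟨w, hw, (sub_eq_zero.1 (eq_zero_of_agreesOver_univ
      (sub_mem hu (cellBoundary_mem_cycles t w)) hagree)).symm⟩

end Exactness

section ShiftsOfCells

variable {K P Q : Type} [Field K] [Fintype P] {𝔄 : Set (P → Q)}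

theorem prod_X_graph (f : P → Q) :
    ∏ i, (X (i, f i) : MvPolynomial (P × Q) K) =
      monomial (squarefreeExponent (graphFinset f)) 1 := by
  rw [squarefreeExponent, graphFinset, Finset.sum_map, monomial_sum_one]
  rfl

theorem isCell_graphFinset {f : P → Q} (hf : f ∈ 𝔄) : IsCell 𝔄 (graphFinset f) where
  isFull i := ⟨f i, mem_graphFinset.2 rfl⟩
  isAdmissible g hg := by rwa [show g = f from funext fun i => mem_graphFinset.1 (hg i)]

theorem exists_graphFinset_subset {S : Finset (P × Q)} (hS : IsCell 𝔄 S) :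
    ∃ f ∈ 𝔄, graphFinset f ⊆ S := by
  choose f hf using hS.isFull
  exact ⟨f, hS.isAdmissible f hf, fun x hx => by
    rw [← Prod.mk.eta (p := x), mem_graphFinset.1 hx]; exact hf x.1⟩

theorem monomial_mem_span_graph_iff {α : P × Q →₀ ℕ} :
    monomial α (1 : K) ∈ Ideal.span ((fun f : P → Q =>
        ∏ i, (X (i, f i) : MvPolynomial (P × Q) K)) '' 𝔄) ↔
      ∃ S : Cell 𝔄 0, squarefreeExponent S.1 ≤ α := by
  simp only [prod_X_graph]
  rw [← Set.image_image (fun d => monomial d (1 : K)) fun f => squarefreeExponent (graphFinset f),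
    monomial_mem_span_monomial_image_iff, Set.exists_mem_image]
  refine ⟨fun ⟨f, hf, hα⟩ => ⟨⟨_, isCell_graphFinset hf, card_graphFinset f⟩, hα⟩,
    fun ⟨S, hα⟩ => ?_⟩
  obtain ⟨f, hf, hfS⟩ := exists_graphFinset_subset S.2.1
  exact ⟨f, hf, (squarefreeExponent_le_squarefreeExponent.2 hfS).trans hα⟩

theorem isAntichain_range_squarefreeExponent_cell (𝔄 : Set (P → Q)) (t : ℕ) :
    IsAntichain (· ≤ ·) (Set.range fun S : Cell 𝔄 t => squarefreeExponent S.1) := by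
  rintro _ ⟨S, rfl⟩ _ ⟨T, rfl⟩ hne hle
  exact hne (congrArg squarefreeExponent (Finset.eq_of_subset_of_card_le
    (squarefreeExponent_le_squarefreeExponent.1 hle) (by rw [S.2.2, T.2.2])))

end ShiftsOfCells

theorem stmt4_general {K P Q : Type} [Field K] [Fintype P] [LinearOrder P] [LinearOrder Q]
    {𝔄 : Set (P → Q)} (hinf : InfClosed 𝔄) (hupd : UpdateClosed 𝔄)
    (Res : MinMGFreeRes K (P × Q)
      (Ideal.span ((fun f : P → Q => ∏ i, (X (i, f i) : MvPolynomial (P × Q) K)) '' 𝔄)))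
    (t : ℕ) (d : P × Q →₀ ℕ) :
    IsMinGen (Ideal.span {p : MvPolynomial (P × Q) K |
        ∃ b : Res.B t, p = monomial (Res.deg t b) (1 : K)}) d ↔
      ∃ S, IsCell 𝔄 S ∧ S.card = Fintype.card P + t ∧ squarefreeExponent S = d := by
  have hshifts : Set.range (Res.deg t) =
      Set.range fun S : Cell 𝔄 t => squarefreeExponent S.1 :=
    Res.frame_isMinimal.range_deg_eq (cellFrame_isMinimal 𝔄) Res.frame_isResolution
      (cellFrame_isResolution hinf hupd)
      (fun α => (Res.monomial_mem_iff α).symm.trans monomial_mem_span_graph_iff) t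
  have hgen : {p : MvPolynomial (P × Q) K | ∃ b, p = monomial (Res.deg t b) 1} =
      (fun d => monomial d (1 : K)) '' Set.range (Res.deg t) := by
    ext p
    simp [eq_comm]
  rw [hgen, hshifts, isMinGen_span_iff_of_isAntichain
    (isAntichain_range_squarefreeExponent_cell 𝔄 t)]
  simp [and_assoc]

section PosetIdeals

variable {P Q : Type*} [LinearOrder Q] {r : P → P → Prop} {A : P → Finset Q} {𝔄 : Set (P → Q)}

/-- The poset `Hom(P, A)` of the `r`-isotone functions with values in the sets `A i`. -/
def isotoneSections (r : P → P → Prop) (A : P → Finset Q) : Set (P → Q) :=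
  {f | (∀ i, f i ∈ A i) ∧ ∀ i j, r i j → f i ≤ f j}

/-- The poset ideals of `Hom(P, A)`. -/
structure IsPosetIdeal (r : P → P → Prop) (A : P → Finset Q) (𝔄 : Set (P → Q)) : Prop where
  subset : 𝔄 ⊆ isotoneSections r A
  mem_of_le : ∀ f ∈ 𝔄, ∀ g ∈ isotoneSections r A, g ≤ f → g ∈ 𝔄

namespace IsPosetIdeal

theorem infClosed (h : IsPosetIdeal r A 𝔄) : InfClosed 𝔄 := by
  refine fun f hf g hg => h.mem_of_le f hf _ ⟨fun i => ?_, fun i j hij =>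
    inf_le_inf ((h.subset hf).2 i j hij) ((h.subset hg).2 i j hij)⟩ inf_le_left
  rcases min_choice (f i) (g i) with hi | hi
  · rw [Pi.inf_apply, hi]; exact (h.subset hf).1 i
  · rw [Pi.inf_apply, hi]; exact (h.subset hg).1 i

theorem updateClosed [LinearOrder P] (h : IsPosetIdeal r A 𝔄) (hr : ∀ i j, r i j → i ≤ j) :
    UpdateClosed 𝔄 := by
  intro f hf g hg hfg i hbelow
  obtain ⟨hfA, hfmono⟩ := h.subset hf
  obtain ⟨hgA, hgmono⟩ := h.subset hg
  refine h.mem_of_le g hg _ ⟨fun j => ?_, fun j k hjk => ?_⟩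
    (update_le_self_iff.2 (hfg i))
  · obtain rfl | hj := eq_or_ne j i
    · rw [Function.update_self]; exact hfA j
    · rw [Function.update_of_ne hj]; exact hgA j
  · obtain rfl | hj := eq_or_ne j i <;> obtain rfl | hk := eq_or_ne k j
    · rfl
    · rw [Function.update_self, Function.update_of_ne hk]
      exact (hfg j).trans (hgmono j k hjk)
    · rfl
    · rw [Function.update_of_ne hj]
      obtain rfl | hki := eq_or_ne k i
      · rw [Function.update_self, ← hbelow j ((hr j k hjk).lt_of_ne hj)]
        exact hfmono j k hjk
      · rw [Function.update_of_ne hki]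
        exact hgmono j k hjk

theorem forall_mem_iff (h : IsPosetIdeal r A 𝔄) {Kf : P → Finset Q}
    (hne : ∀ i, (Kf i).Nonempty) :
    (∀ g : P → Q, (∀ i, g i ∈ Kf i) → g ∈ 𝔄) ↔
      (∀ i, Kf i ⊆ A i) ∧ (∀ i j, r i j → i ≠ j → ∀ a ∈ Kf i, ∀ b ∈ Kf j, a ≤ b) ∧
        ∃ g ∈ 𝔄, ∀ i, g i ∈ Kf i ∧ ∀ a ∈ Kf i, a ≤ g i := by
  classical
  constructor
  · intro hmem
    choose g hg hmax using fun i => (Kf i).exists_max_image id (hne i)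
    have hupdate : ∀ f : P → Q, (∀ j, f j ∈ Kf j) → ∀ i, ∀ a ∈ Kf i,
        ∀ j, Function.update f i a j ∈ Kf j := fun f hf i a ha =>
      (Function.forall_update_iff f fun j x => x ∈ Kf j).2 ⟨ha, fun j _ => hf j⟩
    refine ⟨fun i a ha => ?_, fun i j hij hne a ha b hb => ?_, g, hmem g hg,
      fun i => ⟨hg i, hmax i⟩⟩
    · simpa using (h.subset (hmem _ (hupdate g hg i a ha))).1 i
    · simpa [hne] using
        (h.subset (hmem _ (hupdate _ (hupdate g hg i a ha) j b hb))).2 i j hij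
  · rintro ⟨hA, hle, g, hg, hmax⟩ f hf
    refine h.mem_of_le g hg f ⟨fun i => hA i (hf i), fun i j hij => ?_⟩ fun i =>
      (hmax i).2 _ (hf i)
    obtain rfl | hij' := eq_or_ne i j
    · rfl
    · exact hle i j hij hij' _ (hf i) _ (hf j)

end IsPosetIdeal

end PosetIdeals

section Rows

variable {P Q : Type*} [Fintype P]

/-- The set of pairs with prescribed rows. -/
def rowUnion (Kf : P → Finset Q) : Finset (P × Q) :=
  (Finset.univ.sigma Kf).map (Equiv.sigmaEquivProd P Q).toEmbedding

theorem mem_rowUnion {Kf : P → Finset Q} {x : P × Q} : x ∈ rowUnion Kf ↔ x.2 ∈ Kf x.1 := by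
  simp [rowUnion]

theorem sum_rowUnion {M : Type*} [AddCommMonoid M] (Kf : P → Finset Q) (f : P × Q → M) :
    ∑ x ∈ rowUnion Kf, f x = ∑ i, ∑ a ∈ Kf i, f (i, a) :=
  Finset.sum_finset_product _ _ _ fun x => by simp [mem_rowUnion]

theorem card_rowUnion (Kf : P → Finset Q) : (rowUnion Kf).card = ∑ i, (Kf i).card := by
  simp only [Finset.card_eq_sum_ones, sum_rowUnion]

theorem rowUnion_surjective :
    Function.Surjective (rowUnion : (P → Finset Q) → Finset (P × Q)) := by
  classical
  exact fun S => ⟨fun i => (S.filter fun x => x.1 = i).image Prod.snd, by ext; simp [mem_rowUnion]⟩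

theorem isCell_rowUnion_iff {𝔄 : Set (P → Q)} {Kf : P → Finset Q} :
    IsCell 𝔄 (rowUnion Kf) ↔
      (∀ i, (Kf i).Nonempty) ∧ ∀ g : P → Q, (∀ i, g i ∈ Kf i) → g ∈ 𝔄 := by
  have hfull : IsFull (rowUnion Kf) ↔ ∀ i, (Kf i).Nonempty := by
    simp only [IsFull, mem_rowUnion, Finset.Nonempty]
  have hadm : IsAdmissible 𝔄 (rowUnion Kf) ↔ ∀ g : P → Q, (∀ i, g i ∈ Kf i) → g ∈ 𝔄 := by
    simp only [IsAdmissible, mem_rowUnion]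
  exact ⟨fun h => ⟨hfull.1 h.isFull, hadm.1 h.isAdmissible⟩,
    fun h => ⟨hfull.2 h.1, hadm.2 h.2⟩⟩

end Rows

theorem IsPosetIdeal.describedExp_iff {m n : ℕ} {r : Fin m → Fin m → Prop}
    {A : Fin m → Finset (Fin n)} {𝔄 : Set (Fin m → Fin n)} (h : IsPosetIdeal r A 𝔄) {t : ℕ}
    {dd : Fin m × Fin n →₀ ℕ} :
    DescribedExp m n r A 𝔄 t dd ↔
      ∃ S, IsCell 𝔄 S ∧ S.card = Fintype.card (Fin m) + t ∧ squarefreeExponent S = dd := by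
  rw [rowUnion_surjective.exists, DescribedExp]
  refine exists_congr fun Kf => ?_
  rw [isCell_rowUnion_iff, card_rowUnion, squarefreeExponent, sum_rowUnion, Fintype.card_fin,
    eq_comm (b := dd)]
  constructor
  · rintro ⟨hA, hne, hcard, hle, hmax, hdd⟩
    exact ⟨⟨hne, (h.forall_mem_iff hne).2 ⟨hA, hle, hmax⟩⟩, hcard, hdd⟩
  · rintro ⟨⟨hne, hmem⟩, hcard, hdd⟩
    obtain ⟨hA, hle, hmax⟩ := (h.forall_mem_iff hne).1 hmem
    exact ⟨hA, hne, hcard, hle, hmax, hdd⟩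

/-- for the generalized co-letterplace ideal `L(𝔄)` and any
minimal multigraded free resolution of it, the minimal generating set of the
`t`-th homological shift ideal `HS_t(L(𝔄))` (generated by the monomials whose
exponents are the `t`-th multigraded shifts) consists exactly of the
described monomials. -/
theorem stmt4 (K : Type) [Field K] (m n : ℕ) (r : Fin m → Fin m → Prop)
    (hrefl : ∀ i, r i i) (htrans : ∀ i j k, r i j → r j k → r i k)
    (hcompat : ∀ i j, r i j → i ≤ j)
    (A : Fin m → Finset (Fin n)) (hA : ∀ i, (A i).Nonempty)
    (𝔄 : Set (Fin m → Fin n)) (h𝔄ne : 𝔄.Nonempty)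
    (hsub : ∀ f ∈ 𝔄, (∀ i, f i ∈ A i) ∧ (∀ i j, r i j → f i ≤ f j))
    (hdown : ∀ f ∈ 𝔄, ∀ g : Fin m → Fin n, (∀ i, g i ∈ A i) →
      (∀ i j, r i j → g i ≤ g j) → (∀ i, g i ≤ f i) → g ∈ 𝔄)
    (Res : MinMGFreeRes K (Fin m × Fin n)
      (Ideal.span ((fun f : Fin m → Fin n =>
        ∏ i : Fin m, (X (i, f i) : MvPolynomial (Fin m × Fin n) K)) '' 𝔄)))
    (t : ℕ) (dd : Fin m × Fin n →₀ ℕ) :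
    IsMinGen (Ideal.span {p : MvPolynomial (Fin m × Fin n) K |
        ∃ b : Res.B t, p = monomial (Res.deg t b) (1 : K)}) dd ↔
      DescribedExp m n r A 𝔄 t dd := by
  have h : IsPosetIdeal r A 𝔄 := ⟨hsub, fun f hf g hg => hdown f hf g hg.1 hg.2⟩
  exact (stmt4_general h.infClosed (h.updateClosed hcompat) Res t dd).trans h.describedExp_iff.symm
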